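/- Consider the inverted pendulum cart on a constantly inclined roller coaster: configuration variables (x¹,x²) = (φ,s), constant inclination α₀ with sin α₀ ≠ 0, smooth curvature function k : ℝ → ℝ, mass matrix g₁₁ = 1, g₁₂ = g₂₁ = b sin(α₀ − φ), g₂₂ = 1 + k(s)² sin²(φ)/sin²(α₀), with 0 < b < 1. Define β(s) = ∫₀ˢ k(p)²/(b sin²α₀) dp and z²(φ,s) = β(s) + cos(α₀) ln|csc φ + cot φ| − sin(α₀) ln|sec φ + tan φ|. Then for every smooth function ν : ℝ → ℝ, the pair λ¹(φ,s) = ν(z²) − (sin(α₀ − φ)/sin(2φ)) ν′(z²), λ²(φ,s) = ν′(z²)/(b sin(2φ)) satisfies the λ-equations ∂(g_{1i}λ^i)/∂x^k − 2[k1,i]λ^i = 0 (k = 1,2) on the region {(φ,s) : 0 < φ < π/2}. -/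

import Mathlib

/-- Partial derivative in the `k`-th coordinate direction. -/
noncomputable def pd {n : ℕ} (k : Fin n) (f : (Fin n → ℝ) → ℝ) (x : Fin n → ℝ) : ℝ :=
  fderiv ℝ f x (Pi.single k 1)

/-- Christoffel symbol of the first kind `[ij,k]` of the matrix-valued map `g`. -/
noncomputable def chr {n : ℕ} (g : (Fin n → ℝ) → Matrix (Fin n) (Fin n) ℝ)
    (i j k : Fin n) (x : Fin n → ℝ) : ℝ :=
  (1/2) * (pd i (fun y => g y j k) x + pd j (fun y => g y i k) x - pd k (fun y => g y i j) x)

/-- Mass matrix of the inverted pendulum cart on a constantly inclined roller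
coaster; coordinates `(x¹, x²) = (φ, s)`. -/
noncomputable def gIncline (b α₀ : ℝ) (k : ℝ → ℝ) (x : Fin 2 → ℝ) :
    Matrix (Fin 2) (Fin 2) ℝ :=
  !![1, b * Real.sin (α₀ - x 0);
     b * Real.sin (α₀ - x 0), 1 + (k (x 1))^2 * (Real.sin (x 0))^2 / (Real.sin α₀)^2]

/-- `β(s) = ∫₀ˢ k(p)²/(b sin²α₀) dp`. -/
noncomputable def betaIncline (b α₀ : ℝ) (k : ℝ → ℝ) (s : ℝ) : ℝ :=
  ∫ p in (0 : ℝ)..s, (k p)^2 / (b * (Real.sin α₀)^2)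

/-- The characteristic coordinate
`z² = β(s) + cos α₀ ln|csc φ + cot φ| − sin α₀ ln|sec φ + tan φ|`. -/
noncomputable def z2Incline (b α₀ : ℝ) (k : ℝ → ℝ) (φ s : ℝ) : ℝ :=
  betaIncline b α₀ k s
    + Real.cos α₀ * Real.log |1 / Real.sin φ + Real.cos φ / Real.sin φ|
    - Real.sin α₀ * Real.log |1 / Real.cos φ + Real.tan φ|

/-!
The combination `g₁ᵢλⁱ` collapses to `ν(z²)`. Since `g₁₁` is constant and `g` is symmetric, every
Christoffel symbol `[k1,1]` vanishes, while `[11,2] = ∂g₁₂/∂φ` and `[21,2] = ½ ∂g₂₂/∂φ`. The two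
equations therefore read `∂ν(z²)/∂φ = 2 (∂g₁₂/∂φ) λ²` and `∂ν(z²)/∂s = (∂g₂₂/∂φ) λ²`, and after
cancelling `ν′(z²)` they are exactly the two partial derivatives of the characteristic coordinate
`z²`.
-/

section PartialDerivatives

variable {n : ℕ} {f : (Fin n → ℝ) → ℝ} {x : Fin n → ℝ} {k : Fin n}

lemma pd_const (c : ℝ) : pd k (fun _ => c) x = 0 := by
  simp only [pd, fderiv_fun_const, Pi.zero_apply, zero_apply]

lemma pd_eq_of_hasDerivAt_update {f' : ℝ} (hf : DifferentiableAt ℝ f x)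
    (h : HasDerivAt (fun t => f (Function.update x k t)) f' (x k)) : pd k f x = f' :=
  (hf.hasFDerivAt.comp_hasDerivAt_of_eq (x k) (hasDerivAt_update x k (x k))
    (Function.update_eq_self k x).symm).unique h

lemma pd_comp {ν : ℝ → ℝ} (hν : DifferentiableAt ℝ ν (f x)) (hf : DifferentiableAt ℝ f x) :
    pd k (fun y => ν (f y)) x = deriv ν (f x) * pd k f x := by
  have h := (hν.hasDerivAt.comp_hasFDerivAt x hf.hasFDerivAt).fderiv
  simp only [Function.comp_def] at h
  simp only [pd, h, smul_apply, smul_eq_mul]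

end PartialDerivatives

section Christoffel

variable {n : ℕ} {g : (Fin n → ℝ) → Matrix (Fin n) (Fin n) ℝ} {x : Fin n → ℝ}

lemma chr_middle_right_self (i j : Fin n) :
    chr g i j j x = 1 / 2 * pd i (fun y => g y j j) x := by
  rw [chr, add_sub_cancel_right]

lemma chr_left_middle_self (i k : Fin n) :
    chr g i i k x = pd i (fun y => g y i k) x - 1 / 2 * pd k (fun y => g y i i) x := by
  rw [chr]
  ring

lemma chr_left_right_self (hg : ∀ y, (g y).IsSymm) (i j : Fin n) :
    chr g i j i x = 1 / 2 * pd j (fun y => g y i i) x := by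
  simp only [chr, fun y => (hg y).apply i j, add_sub_cancel_left]

end Christoffel

/-- The λ-equations `∂(g_{ji}λ^i)/∂x^k − 2[kj,i]λ^i = 0`, for all `k`, at the point `x`,
for a single unactuated coordinate `j`; coordinates are indexed from `0`, so the paper's `1` is
`j = 0`. -/
def SolvesLambdaEquationsAt {n : ℕ} (g : (Fin n → ℝ) → Matrix (Fin n) (Fin n) ℝ) (j : Fin n)
    (lam : (Fin n → ℝ) → Fin n → ℝ) (x : Fin n → ℝ) : Prop :=
  ∀ k, pd k (fun y => ∑ i, g y j i * lam y i) x - 2 * ∑ i, chr g k j i x * lam x i = 0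

lemma solvesLambdaEquationsAt_fin_two_iff {g : (Fin 2 → ℝ) → Matrix (Fin 2) (Fin 2) ℝ}
    {lam : (Fin 2 → ℝ) → Fin 2 → ℝ} {x : Fin 2 → ℝ} {c : ℝ}
    (hg : ∀ y, (g y).IsSymm) (hc : ∀ y, g y 0 0 = c) :
    SolvesLambdaEquationsAt g 0 lam x ↔
      pd 0 (fun y => ∑ i, g y 0 i * lam y i) x = 2 * pd 0 (fun y => g y 0 1) x * lam x 1 ∧
      pd 1 (fun y => ∑ i, g y 0 i * lam y i) x = pd 0 (fun y => g y 1 1) x * lam x 1 := by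
  have chr_zero (k : Fin 2) : chr g k 0 0 x = 0 := by
    simp only [chr_middle_right_self, hc, pd_const, mul_zero]
  have chr_phi : chr g 0 0 1 x = pd 0 (fun y => g y 0 1) x := by
    simp only [chr_left_middle_self, hc, pd_const, mul_zero, sub_zero]
  have chr_s : chr g 1 0 1 x = 1 / 2 * pd 0 (fun y => g y 1 1) x :=
    chr_left_right_self hg 1 0
  rw [SolvesLambdaEquationsAt, Fin.forall_fin_two]
  simp only [Fin.sum_univ_two (fun i => chr g _ 0 i x * lam x i), chr_zero, chr_phi, chr_s,
    zero_mul, zero_add, sub_eq_zero, ← mul_assoc,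
    mul_one_div_cancel (two_ne_zero (α := ℝ)), one_mul]

section CharacteristicCoordinate

lemma hasDerivAt_log_abs_sec_add_tan {φ : ℝ} (hφ : Real.cos φ ≠ 0) :
    HasDerivAt (fun t => Real.log |1 / Real.cos t + Real.tan t|) (1 / Real.cos φ) φ := by
  have hsin : 1 + Real.sin φ ≠ 0 := fun h => hφ <| pow_eq_zero_iff two_ne_zero |>.mp <| by
    linear_combination Real.sin_sq_add_cos_sq φ + (1 - Real.sin φ) * h
  simp only [Real.log_abs, Real.tan_eq_sin_div_cos, ← add_div]
  refine ((((Real.hasDerivAt_sin φ).const_add 1).fun_div (Real.hasDerivAt_cos φ) hφ).log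
    (div_ne_zero hsin hφ)).congr_deriv ?_
  field_simp
  linear_combination Real.sin_sq_add_cos_sq φ

lemma hasDerivAt_log_abs_csc_add_cot {φ : ℝ} (hφ : Real.sin φ ≠ 0) :
    HasDerivAt (fun t => Real.log |1 / Real.sin t + Real.cos t / Real.sin t|)
      (-(1 / Real.sin φ)) φ := by
  rw [← Real.cos_pi_div_two_sub] at hφ
  simpa only [Real.tan_eq_sin_div_cos, Real.cos_pi_div_two_sub, Real.sin_pi_div_two_sub] using
    (hasDerivAt_log_abs_sec_add_tan hφ).comp_const_sub (Real.pi / 2) φ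

variable {b α₀ φ : ℝ} {k : ℝ → ℝ}

lemma hasDerivAt_betaIncline (hk : Continuous k) (s : ℝ) :
    HasDerivAt (betaIncline b α₀ k) ((k s) ^ 2 / (b * (Real.sin α₀) ^ 2)) s :=
  (by fun_prop : Continuous fun p => (k p) ^ 2 / (b * (Real.sin α₀) ^ 2))
    |>.integral_hasStrictDerivAt 0 s |>.hasDerivAt

lemma hasDerivAt_z2Incline_left (hφ : Real.sin (2 * φ) ≠ 0) (s : ℝ) :
    HasDerivAt (fun t => z2Incline b α₀ k t s) (-2 * Real.cos (α₀ - φ) / Real.sin (2 * φ)) φ := by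
  obtain ⟨⟨-, hsin⟩, hcos⟩ : ((2 : ℝ) ≠ 0 ∧ Real.sin φ ≠ 0) ∧ Real.cos φ ≠ 0 := by
    simpa only [Real.sin_two_mul, mul_ne_zero_iff] using hφ
  refine ((((hasDerivAt_log_abs_csc_add_cot hsin).const_mul (Real.cos α₀)).const_add
    (betaIncline b α₀ k s)).fun_sub
    ((hasDerivAt_log_abs_sec_add_tan hcos).const_mul (Real.sin α₀))).congr_deriv ?_
  rw [Real.sin_two_mul, Real.cos_sub]
  field_simp
  ring

lemma hasDerivAt_z2Incline_right (hk : Continuous k) (φ s : ℝ) :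
    HasDerivAt (z2Incline b α₀ k φ) ((k s) ^ 2 / (b * (Real.sin α₀) ^ 2)) s :=
  ((hasDerivAt_betaIncline hk s).add_const _).sub_const _

variable {x : Fin 2 → ℝ}

lemma differentiableAt_z2Incline (hk : Continuous k) (hx : Real.sin (2 * x 0) ≠ 0) :
    DifferentiableAt ℝ (fun y : Fin 2 → ℝ => z2Incline b α₀ k (y 0) (y 1)) x := by
  -- The `φ`-part of `z²` is its restriction to `s = 0`, where `β` vanishes.
  have hφ := (hasDerivAt_z2Incline_left (b := b) (α₀ := α₀) (k := k) hx 0).differentiableAt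
  have hs := (hasDerivAt_betaIncline (b := b) (α₀ := α₀) hk (x 1)).differentiableAt
  refine ((hφ.comp x (differentiableAt_apply (0 : Fin 2) x)).add
    (hs.comp x (differentiableAt_apply (1 : Fin 2) x))).congr_of_eventuallyEq
    (.of_forall fun y => ?_)
  simp only [z2Incline, betaIncline, intervalIntegral.integral_same, Function.comp_apply,
    Pi.add_apply]
  ring

lemma pd_phi_z2Incline (hk : Continuous k) (hx : Real.sin (2 * x 0) ≠ 0) :
    pd 0 (fun y => z2Incline b α₀ k (y 0) (y 1)) x =
      -2 * Real.cos (α₀ - x 0) / Real.sin (2 * x 0) :=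
  pd_eq_of_hasDerivAt_update (differentiableAt_z2Incline hk hx) <| by
    simpa using hasDerivAt_z2Incline_left hx (x 1)

lemma pd_s_z2Incline (hk : Continuous k) (hx : Real.sin (2 * x 0) ≠ 0) :
    pd 1 (fun y => z2Incline b α₀ k (y 0) (y 1)) x =
      (k (x 1)) ^ 2 / (b * (Real.sin α₀) ^ 2) :=
  pd_eq_of_hasDerivAt_update (differentiableAt_z2Incline hk hx) <| by
    simpa using hasDerivAt_z2Incline_right hk (x 0) (x 1)

end CharacteristicCoordinate

section MassMatrix

variable {b α₀ : ℝ} {k : ℝ → ℝ}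

lemma gIncline_isSymm (x : Fin 2 → ℝ) : (gIncline b α₀ k x).IsSymm := by
  ext i j
  fin_cases i <;> fin_cases j <;> rfl

lemma pd_phi_gIncline_zero_one (x : Fin 2 → ℝ) :
    pd 0 (fun y => gIncline b α₀ k y 0 1) x = -(b * Real.cos (α₀ - x 0)) := by
  change pd 0 (fun y => b * Real.sin (α₀ - y 0)) x = _
  refine pd_eq_of_hasDerivAt_update (by fun_prop) ?_
  simpa using ((Real.hasDerivAt_sin (α₀ - x 0)).comp_const_sub α₀ (x 0)).const_mul b

lemma pd_phi_gIncline_one_one {x : Fin 2 → ℝ} (hk : DifferentiableAt ℝ k (x 1)) :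
    pd 0 (fun y => gIncline b α₀ k y 1 1) x =
      (k (x 1)) ^ 2 * Real.sin (2 * x 0) / (Real.sin α₀) ^ 2 := by
  change pd 0 (fun y => 1 + (k (y 1)) ^ 2 * (Real.sin (y 0)) ^ 2 / (Real.sin α₀) ^ 2) x = _
  refine pd_eq_of_hasDerivAt_update ?_ ?_
  · fun_prop
  · simpa [Real.sin_two_mul, mul_assoc] using ((((Real.hasDerivAt_sin (x 0)).fun_pow 2).const_mul
      ((k (x 1)) ^ 2)).div_const ((Real.sin α₀) ^ 2)).const_add 1

end MassMatrix

/-- The pair `(λ¹, λ²)` of the roller coaster determined by the free function `ν`, as a vector field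
in the coordinates `(φ, s)`. -/
noncomputable def lambdaIncline (b α₀ : ℝ) (k ν : ℝ → ℝ) (x : Fin 2 → ℝ) : Fin 2 → ℝ :=
  ![ν (z2Incline b α₀ k (x 0) (x 1))
      - (Real.sin (α₀ - x 0) / Real.sin (2 * x 0)) * deriv ν (z2Incline b α₀ k (x 0) (x 1)),
    deriv ν (z2Incline b α₀ k (x 0) (x 1)) / (b * Real.sin (2 * x 0))]

lemma sum_gIncline_mul_lambdaIncline {b : ℝ} (hb : b ≠ 0) (α₀ : ℝ) (k ν : ℝ → ℝ)
    (x : Fin 2 → ℝ) :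
    ∑ i, gIncline b α₀ k x 0 i * lambdaIncline b α₀ k ν x i =
      ν (z2Incline b α₀ k (x 0) (x 1)) := by
  simp only [Fin.sum_univ_two, gIncline, lambdaIncline, Matrix.of_apply, Matrix.cons_val_zero,
    Matrix.cons_val_one]
  rw [mul_assoc b, mul_div_assoc', mul_div_assoc', mul_div_mul_left _ _ hb]
  ring

theorem inclined_coaster_lambda_solution_general {b α₀ : ℝ} (hb : b ≠ 0)
    (hα₀ : Real.sin α₀ ≠ 0) {k ν : ℝ → ℝ} (hk : Differentiable ℝ k) (hν : Differentiable ℝ ν)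
    {x : Fin 2 → ℝ} (hx : Real.sin (2 * x 0) ≠ 0) :
    SolvesLambdaEquationsAt (gIncline b α₀ k) 0 (lambdaIncline b α₀ k ν) x := by
  have hz := differentiableAt_z2Incline (b := b) (α₀ := α₀) hk.continuous hx
  have lambda_two : lambdaIncline b α₀ k ν x 1 =
    deriv ν (z2Incline b α₀ k (x 0) (x 1)) / (b * Real.sin (2 * x 0)) := rfl
  rw [solvesLambdaEquationsAt_fin_two_iff gIncline_isSymm (fun _ => rfl)]
  simp only [sum_gIncline_mul_lambdaIncline hb, pd_comp (hν _) hz, lambda_two]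
  constructor
  · rw [pd_phi_z2Incline hk.continuous hx, pd_phi_gIncline_zero_one]
    field_simp
  · rw [pd_s_z2Incline hk.continuous hx, pd_phi_gIncline_one_one (hk _)]
    field_simp

/-- **Case 2 (constant inclination).**  For every smooth `ν`, the pair
`λ¹ = ν(z²) − (sin(α₀−φ)/sin 2φ) ν′(z²)`, `λ² = ν′(z²)/(b sin 2φ)` solves the
λ-equations on the region `0 < φ < π/2`. -/
theorem inclined_coaster_lambda_solution
    (b α₀ : ℝ) (hb0 : 0 < b) (hb1 : b < 1) (hα₀ : Real.sin α₀ ≠ 0)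
    (k : ℝ → ℝ) (hk : ContDiff ℝ (⊤ : ℕ∞) k)
    (ν : ℝ → ℝ) (hν : ContDiff ℝ (⊤ : ℕ∞) ν) :
    ∀ x : Fin 2 → ℝ, 0 < x 0 → x 0 < Real.pi / 2 → ∀ k' : Fin 2,
      pd k' (fun y => ∑ i, gIncline b α₀ k y 0 i *
          ![ν (z2Incline b α₀ k (y 0) (y 1))
              - (Real.sin (α₀ - y 0) / Real.sin (2 * y 0)) *
                deriv ν (z2Incline b α₀ k (y 0) (y 1)),
            deriv ν (z2Incline b α₀ k (y 0) (y 1)) / (b * Real.sin (2 * y 0))] i) x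
        - 2 * ∑ i, chr (gIncline b α₀ k) k' 0 i x *
            ![ν (z2Incline b α₀ k (x 0) (x 1))
                - (Real.sin (α₀ - x 0) / Real.sin (2 * x 0)) *
                  deriv ν (z2Incline b α₀ k (x 0) (x 1)),
              deriv ν (z2Incline b α₀ k (x 0) (x 1)) / (b * Real.sin (2 * x 0))] i
        = 0 := by
  intro x h0 h1
  have sin_pos : 0 < Real.sin (2 * x 0) := Real.sin_pos_of_pos_of_lt_pi (by linarith) (by linarith)
  exact inclined_coaster_lambda_solution_general hb0.ne' hα₀ (hk.differentiable (by simp))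
    (hν.differentiable (by simp)) sin_pos.ne'
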